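/- Let θ = [0; a_1, a_2, a_3, …] be irrational with a_1 = a_2 = 1 and suppose lim_{ν→∞} Q_{ν−1}/a_{ν+1} = 0, where Q_ν are the convergent denominators. Then there exists a 1-periodic continuous function g of bounded variation with ∫_0^1 g(x)dx = 0 such that liminf_{ν→∞} ∑_{k=0}^{Q_ν − 1} g(kθ) > 0; in fact lim_{ν→∞} ∑_{k=0}^{Q_ν − 1} g(kθ) = 1/6. -/

import Mathlib

open scoped BigOperators

/-- Distance from `x` to the nearest integer. -/
noncomputable def nint (x : ℝ) : ℝ := |x - round x|

/-- Complete quotients `α_n` of `θ`: `α_0 = θ`, `α_{n+1} = 1 / {α_n}`. -/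
noncomputable def cq (θ : ℝ) : ℕ → ℝ
  | 0 => θ
  | n + 1 => 1 / Int.fract (cq θ n)

/-- Partial quotients `a_n` of the continued fraction of `θ`. -/
noncomputable def pq (θ : ℝ) (n : ℕ) : ℤ := ⌊cq θ n⌋

/-- Denominators `Q_n` of the convergents of `θ`: `Q_0 = 1`, `Q_1 = a_1`,
`Q_{n+2} = a_{n+2} Q_{n+1} + Q_n`. -/
noncomputable def qden (θ : ℝ) : ℕ → ℤ
  | 0 => 1
  | 1 => pq θ 1
  | n + 2 => pq θ (n + 2) * qden θ (n + 1) + qden θ n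

/-!
If `P / Q` is a convergent of `θ` and `Q * |Q * θ - P|` is small compared with the distance from
`Q * t` to the nearest integer, then the points `k * θ + t`, `k < Q`, fall into the `Q` distinct
intervals `[j / Q, (j + 1) / Q)` modulo `1`, and the sum of the sawtooth `{x} - 1 / 2` over them is
`{Q * t} - 1 / 2` up to a small error. The denominators `Q_n` of the convergents are lacunary with
ratios tending to infinity, so uncountably many shifts `t` satisfy `{Q_n * t} → α` with a uniform
rate. Averaging the sawtooth over an atomless probability measure on such shifts removes the jumps
but keeps bounded variation, and yields sums tending to `α - 1 / 2`.
-/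

section ContinuedFraction

open GenContFract Filter Topology

variable {θ : ℝ}

theorem irrational_cq (hθ : Irrational θ) (n : ℕ) : Irrational (cq θ n) := by
  induction n with
  | zero => exact hθ
  | succ n ih => simpa [cq] using (ih.sub_intCast ⌊cq θ n⌋).inv

theorem one_le_pq_succ (hθ : Irrational θ) (n : ℕ) : 1 ≤ pq θ (n + 1) := by
  have hpos : 0 < Int.fract (cq θ n) := Int.fract_pos.2 ((irrational_cq hθ n).ne_int _)
  rw [pq, Int.le_floor, cq, Int.cast_one]
  exact (one_le_div hpos).2 (Int.fract_lt_one _).le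

theorem stream_eq_some_of_cq (hθ : Irrational θ) (n : ℕ) :
    IntFractPair.stream θ n = some (IntFractPair.of (cq θ n)) := by
  induction n with
  | zero => rfl
  | succ n ih =>
    have hfr : Int.fract (cq θ n) ≠ 0 := Int.fract_ne_zero_iff.2 fun h => by
      obtain ⟨m, hm⟩ := h
      exact (irrational_cq hθ n).ne_int m hm.symm
    rw [IntFractPair.stream_succ_of_some ih hfr, cq, one_div]
    rfl

theorem get?_of_eq_some_pq_succ (hθ : Irrational θ) (n : ℕ) :
    (GenContFract.of θ).s.get? n = some ⟨1, pq θ (n + 1)⟩ :=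
  get?_of_eq_some_of_succ_get?_intFractPair_stream (stream_eq_some_of_cq hθ (n + 1))

theorem not_terminatedAt_of_irrational (hθ : Irrational θ) (n : ℕ) :
    ¬ (GenContFract.of θ).TerminatedAt n := by
  simp [terminatedAt_iff_s_none, get?_of_eq_some_pq_succ hθ n]

theorem dens_of_eq_qden (hθ : Irrational θ) :
    ∀ n, (GenContFract.of θ).dens n = qden θ n
  | 0 => by simp [qden]
  | 1 => first_den_eq (get?_of_eq_some_pq_succ hθ 0)
  | n + 2 => by
    rw [dens_recurrence (get?_of_eq_some_pq_succ hθ (n + 1)) (dens_of_eq_qden hθ n)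
      (dens_of_eq_qden hθ (n + 1)), qden]
    push_cast
    ring

theorem exists_int_eq_nums_of (hθ : Irrational θ) :
    ∀ n, ∃ P : ℤ, (GenContFract.of θ).nums n = P
  | 0 => ⟨⌊θ⌋, by simp⟩
  | 1 => ⟨pq θ 1 * ⌊θ⌋ + 1, by simp [first_num_eq (get?_of_eq_some_pq_succ hθ 0)]⟩
  | n + 2 => by
    obtain ⟨P, hP⟩ := exists_int_eq_nums_of hθ n
    obtain ⟨P', hP'⟩ := exists_int_eq_nums_of hθ (n + 1)
    exact ⟨pq θ (n + 2) * P' + P, by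
      simp [nums_recurrence (get?_of_eq_some_pq_succ hθ (n + 1)) hP hP']⟩

theorem qden_pos (hθ : Irrational θ) (n : ℕ) : 0 < qden θ n := by
  have hfib : (Nat.fib (n + 1) : ℝ) ≤ qden θ n := by
    rw [← dens_of_eq_qden hθ]
    exact succ_nth_fib_le_of_nth_den (Or.inr (not_terminatedAt_of_irrational hθ _))
  have hpos : (0 : ℝ) < Nat.fib (n + 1) := mod_cast Nat.fib_pos.2 n.succ_pos
  exact_mod_cast hpos.trans_le hfib

theorem exists_isCoprime_abs_qden_mul_sub_le (hθ : Irrational θ) (n : ℕ) :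
    ∃ P : ℤ, IsCoprime P (qden θ n) ∧ |qden θ n * θ - P| ≤ 1 / qden θ (n + 1) := by
  obtain ⟨P, hP⟩ := exists_int_eq_nums_of hθ n
  obtain ⟨P', hP'⟩ := exists_int_eq_nums_of hθ (n + 1)
  have hterm := not_terminatedAt_of_irrational hθ n
  refine ⟨P, ?_, ?_⟩
  · have hdet : P * qden θ (n + 1) - qden θ n * P' = (-1) ^ (n + 1) := by
      have h := SimpContFract.determinant (s := SimpContFract.of θ) hterm
      change (GenContFract.of θ).nums n * (GenContFract.of θ).dens (n + 1) -
        (GenContFract.of θ).dens n * (GenContFract.of θ).nums (n + 1) = _ at h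
      rw [hP, hP', dens_of_eq_qden hθ, dens_of_eq_qden hθ] at h
      exact_mod_cast h
    have hsq : ((-1 : ℤ) ^ (n + 1)) * (-1) ^ (n + 1) = 1 := by simp [← mul_pow]
    exact ⟨(-1) ^ (n + 1) * qden θ (n + 1), -(-1) ^ (n + 1) * P', by
      linear_combination (-1) ^ (n + 1) * hdet + hsq⟩
  · have hq : (0 : ℝ) < qden θ n := mod_cast qden_pos hθ n
    have h := abs_sub_convs_le hterm
    rw [conv_eq_num_div_den, hP, dens_of_eq_qden hθ, dens_of_eq_qden hθ] at h
    calc |qden θ n * θ - P| = qden θ n * |θ - P / qden θ n| := by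
          rw [← abs_of_pos hq, ← abs_mul, abs_of_pos hq, mul_sub, mul_div_cancel₀ _ hq.ne']
      _ ≤ qden θ n * (1 / (qden θ n * qden θ (n + 1))) := by gcongr
      _ = 1 / qden θ (n + 1) := by field_simp

theorem tendsto_qden_div_qden_succ (hθ : Irrational θ) (ha : Tendsto (pq θ) atTop atTop) :
    Tendsto (fun n => (qden θ n : ℝ) / qden θ (n + 1)) atTop (𝓝 0) := by
  have hq (n : ℕ) : (0 : ℝ) < qden θ n := mod_cast qden_pos hθ n
  have hinv : Tendsto (fun n => (pq θ (n + 1) : ℝ)⁻¹) atTop (𝓝 0) :=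
    (tendsto_intCast_atTop_atTop.comp (ha.comp (tendsto_add_atTop_nat 1))).inv_tendsto_atTop
  refine squeeze_zero (fun n => (div_pos (hq _) (hq _)).le) (fun n => ?_) hinv
  have hrec := le_of_succ_get?_den (partDen_eq_s_b (get?_of_eq_some_pq_succ hθ n))
  have hp : (0 : ℝ) < pq θ (n + 1) := mod_cast one_le_pq_succ hθ n
  rw [dens_of_eq_qden hθ, dens_of_eq_qden hθ] at hrec
  rwa [div_le_iff₀ (hq _), ← div_eq_inv_mul, le_div_iff₀' hp]

theorem tendsto_pq_atTop_of_tendsto_qden_div (hθ : Irrational θ)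
    (h : Tendsto (fun n => (qden θ n : ℝ) / pq θ (n + 2)) atTop (𝓝 0)) :
    Tendsto (pq θ) atTop atTop := by
  have hp (n : ℕ) : (0 : ℝ) < pq θ (n + 2) := mod_cast one_le_pq_succ hθ (n + 1)
  have hq (n : ℕ) : (1 : ℝ) ≤ qden θ n := mod_cast qden_pos hθ n
  have hinv : Tendsto (fun n => (pq θ (n + 2) : ℝ)⁻¹) atTop (𝓝[>] 0) := by
    refine tendsto_nhdsWithin_iff.2 ⟨squeeze_zero (fun n => (inv_pos.2 (hp n)).le) (fun n => ?_) h,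
      .of_forall fun n => inv_pos.2 (hp n)⟩
    rw [inv_eq_one_div]
    exact div_le_div_of_nonneg_right (hq n) (hp n).le
  rw [← tendsto_add_atTop_iff_nat 2, ← tendsto_intCast_atTop_iff (R := ℝ)]
  simpa only [Pi.inv_def, inv_inv] using hinv.inv_tendsto_nhdsGT_zero

end ContinuedFraction

theorem sum_range_natCast_zmod {M : Type*} [AddCommMonoid M] (Q : ℕ) [NeZero Q]
    (f : ZMod Q → M) : ∑ k ∈ Finset.range Q, f k = ∑ x, f x :=
  Finset.sum_nbij' (fun k => (k : ZMod Q)) ZMod.val (by simp) (by simp [ZMod.val_lt])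
    (fun k hk => ZMod.val_cast_of_lt (Finset.mem_range.1 hk)) (by simp) (by simp)

theorem sum_range_mul_add_emod {M : Type*} [AddCommMonoid M] {Q : ℕ} [NeZero Q] {P : ℤ}
    (hP : IsCoprime P Q) (m : ℤ) (h : ℤ → M) :
    ∑ k ∈ Finset.range Q, h ((k * P + m) % Q) = ∑ j ∈ Finset.range Q, h j := by
  obtain ⟨u, hu⟩ := (ZMod.coe_int_isUnit_iff_isCoprime P Q).2 hP.symm
  have hperm := (u.mulRight.trans (Equiv.addRight (m : ZMod Q))).sum_comp fun x => h x.val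
  rw [← sum_range_natCast_zmod, ← sum_range_natCast_zmod] at hperm
  convert hperm using 2 with k _ j hj
  · simp [hu, ← ZMod.val_intCast]
  · simp [ZMod.val_cast_of_lt (Finset.mem_range.1 hj)]

theorem fract_natCast_mul_add_eq {Q : ℕ} [NeZero Q] {P : ℤ} {θ t : ℝ}
    (hlow : Q * |Q * θ - P| ≤ Int.fract (Q * t))
    (hup : Q * |Q * θ - P| < 1 - Int.fract (Q * t)) {k : ℕ} (hk : k < Q) :
    Int.fract (k * θ + t) =
      (((k * P + ⌊Q * t⌋) % Q : ℤ) + Int.fract (Q * t) + k * (Q * θ - P)) / Q := by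
  have hQ : (0 : ℝ) < Q := mod_cast Nat.pos_of_neZero Q
  set m := k * P + ⌊Q * t⌋ with hm
  have herr : |k * (Q * θ - P)| ≤ Q * |Q * θ - P| := by
    rw [abs_mul, Nat.abs_cast]
    gcongr
  have hmod_nonneg : (0 : ℝ) ≤ (m % Q : ℤ) :=
    mod_cast Int.emod_nonneg m (by exact_mod_cast hQ.ne')
  have hmod_lt : ((m % Q : ℤ) : ℝ) + 1 ≤ Q :=
    mod_cast Int.emod_lt_of_pos m (by exact_mod_cast hQ)
  have hdiv : ((m % Q : ℤ) : ℝ) + Q * (m / Q : ℤ) = k * P + ⌊Q * t⌋ := by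
    exact_mod_cast (Int.emod_add_mul_ediv m Q).trans hm
  have hfloor := Int.floor_add_fract (Q * t)
  rw [abs_le] at herr
  refine Int.fract_eq_iff.2 ⟨div_nonneg (by linarith) hQ.le, (div_lt_one hQ).2 (by linarith),
    m / Q, ?_⟩
  generalize Int.fract (Q * t) = f at *
  field_simp
  linear_combination -hfloor - hdiv

theorem sum_fract_natCast_mul_add {Q : ℕ} [NeZero Q] {P : ℤ} (hP : IsCoprime P Q) {θ t : ℝ}
    (hlow : Q * |Q * θ - P| ≤ Int.fract (Q * t))
    (hup : Q * |Q * θ - P| < 1 - Int.fract (Q * t)) :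
    ∑ k ∈ Finset.range Q, (Int.fract (k * θ + t) - 1 / 2) =
      Int.fract (Q * t) - 1 / 2 + (Q - 1) / 2 * (Q * θ - P) := by
  have hQ : (Q : ℝ) ≠ 0 := NeZero.ne _
  have hgauss : ∑ j ∈ Finset.range Q, (j : ℝ) = Q * (Q - 1) / 2 := by
    have h := congrArg (Nat.cast : ℕ → ℝ) (Finset.sum_range_id_mul_two Q)
    push_cast [Nat.cast_sub (Nat.pos_of_neZero Q)] at h
    linarith
  have hresidues := sum_range_mul_add_emod hP ⌊Q * t⌋ fun j : ℤ => (j : ℝ)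
  simp only [Int.cast_natCast] at hresidues
  rw [Finset.sum_sub_distrib, Finset.sum_congr rfl fun k hk =>
    fract_natCast_mul_add_eq hlow hup (Finset.mem_range.1 hk), ← Finset.sum_div,
    Finset.sum_add_distrib, Finset.sum_add_distrib, hresidues, ← Finset.sum_mul, hgauss]
  simp only [Finset.sum_const, Finset.card_range, nsmul_eq_mul]
  field_simp
  ring

theorem abs_sum_fract_natCast_mul_add_sub_le {Q : ℕ} [NeZero Q] {P : ℤ} (hP : IsCoprime P Q)
    {θ t α r : ℝ} (herr : Q * |Q * θ - P| ≤ r) (ht : Int.fract (Q * t) ∈ Set.Icc α (α + 5 * r))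
    (hr : r ≤ α) (hr' : 6 * r < 1 - α) :
    |∑ k ∈ Finset.range Q, (Int.fract (k * θ + t) - 1 / 2) - (α - 1 / 2)| ≤ 6 * r := by
  obtain ⟨htα, htr⟩ := ht
  have hdrift : |(Q - 1) / 2 * (Q * θ - P)| ≤ r := by
    have hQ : (1 : ℝ) ≤ Q := mod_cast Nat.pos_of_neZero Q
    rw [abs_mul, abs_of_nonneg (by linarith)]
    refine le_trans ?_ herr
    gcongr
    linarith
  rw [sum_fract_natCast_mul_add hP (by linarith) (by linarith), abs_le]
  rw [abs_le] at hdrift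
  constructor <;> linarith

/-- Approximations to a point `T` for which every `q n * T` is just above `c n` modulo `1`: step `n`
moves right by the least amount that makes `q n * x - c n` an integer. -/
noncomputable def greedyPoint (q c : ℕ → ℝ) : ℕ → ℝ
  | 0 => 0
  | n + 1 => greedyPoint q c n + Int.fract (c n - q n * greedyPoint q c n) / q n

theorem monotone_greedyPoint {q c : ℕ → ℝ} (hq : ∀ n, 0 < q n) : Monotone (greedyPoint q c) :=
  monotone_nat_of_le_succ fun n =>
    le_add_of_nonneg_right (div_nonneg (Int.fract_nonneg _) (hq n).le)

theorem antitone_greedyPoint_add {q c : ℕ → ℝ} (hq : ∀ n, 0 < q n)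
    (hq2 : ∀ n, 2 * q n ≤ q (n + 1)) : Antitone fun n => greedyPoint q c n + 2 / q n :=
  antitone_nat_of_succ_le fun n => by
    have hstep : Int.fract (c n - q n * greedyPoint q c n) / q n ≤ 1 / q n :=
      div_le_div_of_nonneg_right (Int.fract_lt_one _).le (hq n).le
    have htail : 2 / q (n + 1) ≤ 1 / q n := by
      rw [div_le_div_iff₀ (hq _) (hq _)]
      linarith [hq2 n]
    calc greedyPoint q c (n + 1) + 2 / q (n + 1)
        ≤ greedyPoint q c n + 1 / q n + 1 / q n := by rw [greedyPoint]; gcongr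
      _ = greedyPoint q c n + 2 / q n := by ring

theorem exists_fract_mul_sub_le {q : ℕ → ℝ} (hq : ∀ n, 0 < q n)
    (hq2 : ∀ n, 2 * q n ≤ q (n + 1)) (c : ℕ → ℝ) :
    ∃ T : ℝ, ∀ n, Int.fract (q n * T - c n) ≤ 2 * (q n / q (n + 1)) := by
  let p := greedyPoint q c
  have hsup := (monotone_greedyPoint hq).ciSup_mem_iInter_Icc_of_antitone
    (antitone_greedyPoint_add (c := c) hq hq2)
    fun n => le_add_of_nonneg_right (div_pos two_pos (hq n)).le
  refine ⟨⨆ n, p n, fun n => ?_⟩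
  obtain ⟨hlow, hup⟩ := Set.mem_iInter.1 hsup (n + 1)
  have hhit : q n * p (n + 1) - c n = (-⌊c n - q n * p n⌋ : ℤ) := by
    have h : q n * p (n + 1) = q n * p n + Int.fract (c n - q n * p n) := by
      simp only [p, greedyPoint]
      rw [mul_add, mul_div_cancel₀ _ (hq n).ne']
    rw [h, Int.fract]
    push_cast
    ring
  calc Int.fract (q n * (⨆ n, p n) - c n)
      = Int.fract (q n * ((⨆ n, p n) - p (n + 1)) + (-⌊c n - q n * p n⌋ : ℤ)) := by
        rw [← hhit]; ring_nf
    _ = Int.fract (q n * ((⨆ n, p n) - p (n + 1))) := Int.fract_add_intCast _ _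
    _ ≤ q n * ((⨆ n, p n) - p (n + 1)) := sub_le_self _ <|
        Int.cast_nonneg (Int.floor_nonneg.2 (mul_nonneg (hq n).le (sub_nonneg.2 hlow)))
    _ ≤ q n * (2 / q (n + 1)) := by
        gcongr
        · exact (hq n).le
        · exact sub_le_iff_le_add'.2 hup
    _ = 2 * (q n / q (n + 1)) := by ring

/-- The points `t` such that every `q n * t` lies just above `α` modulo `1`; they are the shifts
over which the sawtooth is averaged. With `r = q n / q (n + 1)`, the window of width `5 * r` has
room for two disjoint windows of width `2 * r`, starting at `α` and at `α + 3 * r`. -/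
def fractNearSet (q : ℕ → ℝ) (α : ℝ) : Set ℝ :=
  {t | ∀ n, Int.fract (q n * t) ∈ Set.Icc α (α + 5 * (q n / q (n + 1)))}

theorem measurableSet_fractNearSet (q : ℕ → ℝ) (α : ℝ) : MeasurableSet (fractNearSet q α) := by
  simp only [fractNearSet, Set.ofPred_forall]
  exact .iInter fun n => (measurable_fract.comp (measurable_const_mul (q n))) measurableSet_Icc

theorem not_countable_fractNearSet {q : ℕ → ℝ} {α : ℝ} (hq : ∀ n, 0 < q n) (hα : 0 ≤ α)
    (hgrowth : ∀ n, 5 * (q n / q (n + 1)) < 1 - α) : ¬ (fractNearSet q α).Countable := by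
  rw [Set.countable_iff_exists_subset_range]
  rintro ⟨x, hx⟩
  let r : ℕ → ℝ := fun n => q n / q (n + 1)
  have hr (n : ℕ) : 0 < r n := div_pos (hq _) (hq _)
  have hq2 (n : ℕ) : 2 * q n ≤ q (n + 1) := by
    have h : r n ≤ 1 / 2 := by linarith [hgrowth n]
    rw [div_le_div_iff₀ (hq _) two_pos] at h
    linarith
  -- Diagonal choice: `{q n * T}` will lie in the one of the two windows avoided by `{q n * x n}`.
  let c : ℕ → ℝ := fun n =>
    if Int.fract (q n * x n) ≤ α + 2 * r n then α + 3 * r n else α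
  have hc (n : ℕ) : α ≤ c n ∧ c n ≤ α + 3 * r n := by
    have := hr n
    simp only [c]
    split_ifs <;> constructor <;> linarith
  obtain ⟨T, hT⟩ := exists_fract_mul_sub_le hq hq2 c
  have hfract (n : ℕ) : Int.fract (q n * T) = c n + Int.fract (q n * T - c n) :=
    Int.fract_eq_iff.2 ⟨add_nonneg (hα.trans (hc n).1) (Int.fract_nonneg _),
      by linarith [hT n, (hc n).2, hgrowth n], ⌊q n * T - c n⌋, by rw [Int.fract]; ring⟩
  have hmem : T ∈ fractNearSet q α := fun n => by
    have := Int.fract_nonneg (q n * T - c n)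
    constructor <;> linarith [hT n, hc n, hfract n]
  obtain ⟨n, rfl⟩ := hx hmem
  have hdiff := hfract n
  have hnonneg := Int.fract_nonneg (q n * x n - c n)
  by_cases h : Int.fract (q n * x n) ≤ α + 2 * r n
  · have hcn : c n = α + 3 * r n := if_pos h
    linarith [hr n]
  · have hcn : c n = α := if_neg h
    linarith [hT n]

section ShiftMeasure

open MeasureTheory Filter Topology

theorem exists_isProbabilityMeasure_nullSingletonClass {X : Type*} [MeasurableSpace X]
    [StandardBorelSpace X] {s : Set X} (hs : MeasurableSet s) (hs' : ¬ s.Countable) :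
    ∃ μ : Measure X, IsProbabilityMeasure μ ∧ NullSingletonClass μ ∧ ∀ᵐ x ∂μ, x ∈ s := by
  have := hs.standardBorel
  let e : unitInterval ≃ᵐ s := PolishSpace.measurableEquivOfNotCountable
    (Cardinal.Real.Icc_countable_iff.not.2 (by norm_num)) hs'
  have he : Measurable fun u => (e u : X) := measurable_subtype_coe.comp e.measurable
  refine ⟨volume.map fun u => (e u : X), Measure.isProbabilityMeasure_map he.aemeasurable,
    ⟨fun x => ?_⟩, (ae_map_iff he.aemeasurable hs).2 (.of_forall fun u => (e u).2)⟩
  rw [Measure.map_apply he (measurableSet_singleton x)]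
  exact (Set.subsingleton_singleton.preimage
    (Subtype.val_injective.comp e.injective)).measure_zero _

theorem exists_isProbabilityMeasure_fract_mem_Icc {q : ℕ → ℝ} (hq : ∀ n, 0 < q n)
    (hratio : Tendsto (fun n => q n / q (n + 1)) atTop (𝓝 0)) {α : ℝ} (hα : α ∈ Set.Ico 0 1) :
    ∃ μ : Measure ℝ, IsProbabilityMeasure μ ∧ NullSingletonClass μ ∧
      ∀ᶠ n in atTop, ∀ᵐ t ∂μ,
        Int.fract (q n * t) ∈ Set.Icc α (α + 5 * (q n / q (n + 1))) := by
  obtain ⟨N, hN⟩ := eventually_atTop.1 <| hratio.eventually_lt_const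
    (show (0 : ℝ) < (1 - α) / 5 by linarith [hα.2])
  obtain ⟨μ, hprob, hnull, hμ⟩ := exists_isProbabilityMeasure_nullSingletonClass
    (measurableSet_fractNearSet (fun n => q (N + n)) α)
    (not_countable_fractNearSet (fun n => hq (N + n)) hα.1 fun n => by
      have h : q (N + n) / q (N + (n + 1)) < (1 - α) / 5 := hN (N + n) (N.le_add_right n)
      linarith)
  refine ⟨μ, hprob, hnull, eventually_atTop.2 ⟨N, fun n hn => ?_⟩⟩
  obtain ⟨k, rfl⟩ := Nat.exists_eq_add_of_le hn
  exact hμ.mono fun t ht => ht k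

end ShiftMeasure

theorem locallyBoundedVariationOn_sub_of_monotoneOn {E : Type*} [LinearOrder E] {f g : E → ℝ}
    {s : Set E} (hf : MonotoneOn f s) (hg : MonotoneOn g s) :
    LocallyBoundedVariationOn (fun x => f x - g x) s := by
  have hedist : ∀ x ∈ s, ∀ y ∈ s, edist (f x - g x) (f y - g y) ≤
      edist (f x + g x) (f y + g y) := by
    intro x hx y hy
    wlog hxy : y ≤ x generalizing x y
    · simpa only [edist_comm] using this y hy x hx (le_of_not_ge hxy)
    rw [edist_dist, edist_dist, Real.dist_eq, Real.dist_eq]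
    exact ENNReal.ofReal_le_ofReal <|
      abs_le_abs (by linarith [hg hy hx hxy]) (by linarith [hf hy hx hxy])
  exact fun a b ha hb => ne_top_of_le_ne_top ((hf.add hg).locallyBoundedVariationOn a b ha hb) <|
    iSup_mono fun p => Finset.sum_le_sum fun _ _ =>
      hedist _ (p.2.2.2 _).1 _ (p.2.2.2 _).1

theorem abs_fract_sub_half_le (x : ℝ) : |Int.fract x - 1 / 2| ≤ 1 / 2 :=
  abs_le.2 ⟨by linarith [Int.fract_nonneg x], by linarith [Int.fract_lt_one x]⟩

section Sawtooth

open MeasureTheory Filter Topology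

/-- The average over `t`, with respect to `μ`, of the translates `y ↦ {y + t} - 1 / 2` of the
centred sawtooth, from which the function with large sums is obtained. -/
noncomputable def sawtoothAverage (μ : Measure ℝ) (y : ℝ) : ℝ :=
  ∫ t, (Int.fract (y + t) - 1 / 2) ∂μ

theorem sawtoothAverage_add_one (μ : Measure ℝ) (y : ℝ) :
    sawtoothAverage μ (y + 1) = sawtoothAverage μ y := by
  simp only [sawtoothAverage, add_right_comm y 1, Int.fract_add_one]

section FiniteMeasure

variable {μ : Measure ℝ} [IsFiniteMeasure μ]

theorem integrable_fract_add_sub_half (y : ℝ) :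
    Integrable (fun t => Int.fract (y + t) - 1 / 2) μ :=
  .of_bound ((measurable_fract.comp (measurable_const_add y)).sub_const _).aestronglyMeasurable
    (1 / 2) (.of_forall fun t => abs_fract_sub_half_le (y + t))

theorem continuous_sawtoothAverage [NullSingletonClass μ] : Continuous (sawtoothAverage μ) := by
  refine continuous_iff_continuousAt.2 fun y => continuousAt_of_dominated (bound := fun _ => 1 / 2)
    (.of_forall fun x => (integrable_fract_add_sub_half x).aestronglyMeasurable)
    (.of_forall fun x => .of_forall fun t => abs_fract_sub_half_le (x + t))
    (integrable_const _) ?_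
  have hjumps : {t : ℝ | y + t ∈ Set.range ((↑) : ℤ → ℝ)}.Countable :=
    (Set.countable_range _).preimage (add_right_injective y)
  filter_upwards [compl_mem_ae_iff.2 (hjumps.measure_zero μ)] with t ht
  have hfract : ContinuousAt Int.fract (y + t) := continuousAt_fract fun h => ht ⟨_, h.symm⟩
  exact (hfract.comp (f := fun x => x + t) (by fun_prop)).sub continuousAt_const

theorem monotone_mul_sub_sawtoothAverage :
    Monotone fun y => μ.real Set.univ * y - sawtoothAverage μ y := by
  have hintegral (y : ℝ) : μ.real Set.univ * y - sawtoothAverage μ y =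
      ∫ t, (y - (Int.fract (y + t) - 1 / 2)) ∂μ := by
    rw [integral_sub (integrable_const y) (integrable_fract_add_sub_half y), integral_const,
      smul_eq_mul, sawtoothAverage]
  intro x y hxy
  simp only [hintegral]
  refine integral_mono ((integrable_const x).sub (integrable_fract_add_sub_half x))
    ((integrable_const y).sub (integrable_fract_add_sub_half y)) fun t => ?_
  -- `y - {y + t} = ⌊y + t⌋ - t`
  have : (⌊x + t⌋ : ℝ) ≤ ⌊y + t⌋ := mod_cast Int.floor_mono (by gcongr)
  simp only [Int.fract]
  linarith

theorem boundedVariationOn_sawtoothAverage (a b : ℝ) :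
    BoundedVariationOn (sawtoothAverage μ) (Set.Icc a b) := by
  have hlinear : Monotone fun y => μ.real Set.univ * y := fun x y hxy => by
    simp only
    gcongr
  have h := locallyBoundedVariationOn_sub_of_monotoneOn (hlinear.monotoneOn Set.univ)
    ((monotone_mul_sub_sawtoothAverage (μ := μ)).monotoneOn Set.univ) a b trivial trivial
  simpa only [sub_sub_cancel, Set.univ_inter] using h

theorem intervalIntegral_fract_add_sub_half (t : ℝ) :
    ∫ y in (0 : ℝ)..1, (Int.fract (y + t) - 1 / 2) = 0 := by
  have hper : Function.Periodic (fun y : ℝ => Int.fract y - 1 / 2) 1 := fun y => by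
    simp only [Int.fract_add_one]
  calc ∫ y in (0 : ℝ)..1, (Int.fract (y + t) - 1 / 2)
      = ∫ y in t..t + 1, (Int.fract y - 1 / 2) := by
        rw [intervalIntegral.integral_comp_add_right (fun y : ℝ => Int.fract y - 1 / 2), zero_add,
          add_comm]
    _ = ∫ y in (0 : ℝ)..1, (Int.fract y - 1 / 2) := by
        simpa only [zero_add] using hper.intervalIntegral_add_eq t 0
    _ = ∫ y in (0 : ℝ)..1, (y - 1 / 2) :=
        intervalIntegral.integral_congr_uIoo fun y hy => by
          rw [Set.uIoo_of_le zero_le_one] at hy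
          simp only [Int.fract_eq_self.2 ⟨hy.1.le, hy.2⟩]
    _ = 0 := by norm_num

theorem integral_sawtoothAverage : ∫ y in (0 : ℝ)..1, sawtoothAverage μ y = 0 := by
  have hint : Integrable (Function.uncurry fun y t : ℝ => Int.fract (y + t) - 1 / 2)
      ((volume.restrict (Set.Ioc 0 1)).prod μ) :=
    .of_bound ((measurable_fract.comp (measurable_fst.add measurable_snd)).sub_const
      _).aestronglyMeasurable (1 / 2) (.of_forall fun p => abs_fract_sub_half_le (p.1 + p.2))
  have hswap := integral_integral_swap hint
  simp only [← intervalIntegral.integral_of_le zero_le_one,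
    intervalIntegral_fract_add_sub_half, integral_zero] at hswap
  exact hswap

end FiniteMeasure

theorem abs_sum_sawtoothAverage_sub_le {ι : Type*} {μ : Measure ℝ} [IsProbabilityMeasure μ]
    {s : Finset ι} {y : ι → ℝ} {c ε : ℝ}
    (h : ∀ᵐ t ∂μ, |∑ i ∈ s, (Int.fract (y i + t) - 1 / 2) - c| ≤ ε) :
    |∑ i ∈ s, sawtoothAverage μ (y i) - c| ≤ ε := by
  have hint : ∀ i ∈ s, Integrable (fun t => Int.fract (y i + t) - 1 / 2) μ := fun i _ =>
    integrable_fract_add_sub_half (y i)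
  have hsum : ∑ i ∈ s, sawtoothAverage μ (y i) - c =
      ∫ t, (∑ i ∈ s, (Int.fract (y i + t) - 1 / 2) - c) ∂μ := by
    rw [integral_sub (integrable_finsetSum s hint) (integrable_const c),
      integral_finsetSum s hint, integral_const, probReal_univ, one_smul]
    rfl
  rw [hsum]
  simpa only [probReal_univ, mul_one, Real.norm_eq_abs] using
    norm_integral_le_of_norm_le_const (h.mono fun t ht => (Real.norm_eq_abs _).trans_le ht)

theorem tendsto_sum_sawtoothAverage {θ : ℝ} (hθ : Irrational θ) (ha : Tendsto (pq θ) atTop atTop)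
    {α : ℝ} (hα : α ∈ Set.Ioo 0 1) {μ : Measure ℝ} [IsProbabilityMeasure μ]
    (hμ : ∀ᶠ n in atTop, ∀ᵐ t ∂μ, Int.fract ((qden θ n : ℝ) * t) ∈
      Set.Icc α (α + 5 * ((qden θ n : ℝ) / qden θ (n + 1)))) :
    Tendsto (fun n => ∑ k ∈ Finset.range (qden θ n).toNat, sawtoothAverage μ (k * θ)) atTop
      (𝓝 (α - 1 / 2)) := by
  have hratio := tendsto_qden_div_qden_succ hθ ha
  have hbound : Tendsto (fun n => 6 * ((qden θ n : ℝ) / qden θ (n + 1))) atTop (𝓝 0) := by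
    simpa only [mul_zero] using hratio.const_mul 6
  rw [tendsto_iff_norm_sub_tendsto_zero]
  refine squeeze_zero' (.of_forall fun n => norm_nonneg _) ?_ hbound
  filter_upwards [hμ, hratio.eventually_le_const hα.1,
    hbound.eventually_lt_const (sub_pos.2 hα.2)] with n hn hr hr'
  obtain ⟨P, hP, herr⟩ := exists_isCoprime_abs_qden_mul_sub_le hθ n
  obtain ⟨Q, hQ⟩ := Int.eq_ofNat_of_zero_le (qden_pos hθ n).le
  have : NeZero Q := ⟨fun h => (qden_pos hθ n).ne' (by simp [hQ, h])⟩
  rw [hQ] at hP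
  simp only [hQ, Int.cast_natCast, Int.toNat_natCast] at herr hn hr hr' ⊢
  refine abs_sum_sawtoothAverage_sub_le <| hn.mono fun t ht =>
    abs_sum_fract_natCast_mul_add_sub_le hP ?_ ht hr hr'
  rw [div_eq_mul_one_div]
  gcongr

end Sawtooth

theorem stmt11_general {θ : ℝ} (hθ : Irrational θ)
    (ha : Filter.Tendsto (pq θ) Filter.atTop Filter.atTop) (c : ℝ) :
    ∃ g : ℝ → ℝ, Continuous g ∧ (∀ x, g (x + 1) = g x) ∧
      BoundedVariationOn g (Set.Icc 0 1) ∧ (∫ x in (0 : ℝ)..1, g x) = 0 ∧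
      Filter.Tendsto (fun ν => ∑ k ∈ Finset.range (qden θ ν).toNat, g (k * θ))
        Filter.atTop (nhds c) := by
  obtain ⟨μ, _, _, hμ⟩ := exists_isProbabilityMeasure_fract_mem_Icc
    (fun n => Int.cast_pos.2 (qden_pos hθ n)) (tendsto_qden_div_qden_succ hθ ha)
    (α := 3 / 4) (by norm_num)
  have hlim := (tendsto_sum_sawtoothAverage hθ ha (by norm_num [Set.mem_Ioo]) hμ).const_mul (4 * c)
  refine ⟨fun y => 4 * c * sawtoothAverage μ y, continuous_sawtoothAverage.const_mul _,
    fun x => by simp only [sawtoothAverage_add_one],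
    (lipschitzWith_smul (4 * c)).comp_boundedVariationOn (boundedVariationOn_sawtoothAverage 0 1),
    by rw [intervalIntegral.integral_const_mul, integral_sawtoothAverage, mul_zero], ?_⟩
  simp only [← Finset.mul_sum]
  convert hlim using 2
  ring

open Filter in
/-- Theorem 2: if `θ = [0;1,1,a_3,…]` and `Q_{ν−1}/a_{ν+1} → 0`, there
is a continuous 1-periodic function of bounded variation with zero mean whose sums at the
convergent denominators tend to `1/6` (so the liminf is positive). -/
theorem stmt11 (θ : ℝ) (hθ : Irrational θ)
    (h0 : pq θ 0 = 0) (ha1 : pq θ 1 = 1) (ha2 : pq θ 2 = 1)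
    (hfast : Filter.Tendsto (fun ν : ℕ => (qden θ ν : ℝ) / (pq θ (ν + 2) : ℝ))
      atTop (nhds 0)) :
    ∃ g : ℝ → ℝ, Continuous g ∧ (∀ x : ℝ, g (x + 1) = g x) ∧
      BoundedVariationOn g (Set.Icc 0 1) ∧ (∫ x in (0 : ℝ)..1, g x) = 0 ∧
      (0 < Filter.liminf
        (fun ν : ℕ => ∑ k ∈ Finset.range (qden θ ν).toNat, g (k * θ)) atTop) ∧
      Filter.Tendsto (fun ν : ℕ => ∑ k ∈ Finset.range (qden θ ν).toNat, g (k * θ))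
        atTop (nhds (1 / 6)) := by
  obtain ⟨g, hcont, hper, hbv, hmean, hlim⟩ :=
    stmt11_general hθ (tendsto_pq_atTop_of_tendsto_qden_div hθ hfast) (1 / 6)
  exact ⟨g, hcont, hper, hbv, hmean, hlim.liminf_eq ▸ by norm_num, hlim⟩
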